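/- arXiv:2101.06818 — 4 statements merged into one kernel-verified Lean document; each statement's English description precedes it below -/
import Mathlib

section
/- For all natural numbers n and k with 0 ≤ k < n, the supremum over x ∈ [-1, 1] of |x^n - φ_k(x)| equals p_{n,k} = 2^{1-n} Σ_{j=⌊(n+k)/2⌋+1}^{n} C(n, j). (This is the paper's main theorem: the truncation error of the Chebyshev expansion of x^n equals p_{n,k} exactly in the supremum norm on [-1,1].) -/
open Finset Polynomial

/-- Chebyshev coefficients of the monomial `x ^ n`. -/
noncomputable def chebCoeff (n j : ℕ) : ℝ :=
  if (n - j) % 2 = 0 then (2 : ℝ) ^ (1 - (n : ℤ)) * (n.choose ((n - j) / 2) : ℝ) else 0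

/-- The truncated Chebyshev approximant `φ_k(x) = Σ'_{j=0}^{k} c_j T_j(x)`
(the `j = 0` term halved). -/
noncomputable def phi (n k : ℕ) (x : ℝ) : ℝ :=
  chebCoeff n 0 / 2 * (Polynomial.Chebyshev.T ℝ (0 : ℤ)).eval x +
    ∑ j ∈ Finset.Icc 1 k, chebCoeff n j * (Polynomial.Chebyshev.T ℝ (j : ℤ)).eval x

/-- `p_{n,k} = 2^(1-n) Σ_{j=⌊(n+k)/2⌋+1}^{n} C(n, j)`. -/
noncomputable def pnk (n k : ℕ) : ℝ :=
  (2 : ℝ) ^ (1 - (n : ℤ)) * ∑ j ∈ Finset.Icc ((n + k) / 2 + 1) n, (n.choose j : ℝ)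

lemma two_x_pow_mul_T (x : ℝ) (n : ℕ) : ∀ m : ℤ, (2 * x) ^ n * (Chebyshev.T ℝ m).eval x =
    ∑ i ∈ range (n + 1), (n.choose i : ℝ) * (Chebyshev.T ℝ (m + 2 * i - n)).eval x := by
  induction n with
  | zero => intro m; simp
  | succ n ih =>
    intro m
    have h : (2 * x) * (Chebyshev.T ℝ m).eval x =
        (Chebyshev.T ℝ (m + 1)).eval x + (Chebyshev.T ℝ (m - 1)).eval x := by
      rw [Chebyshev.T_add_one]; simp
    have h2 := Finset.sum_choose_succ_mul
      (fun i _ => (Chebyshev.T ℝ (m + 2 * (i : ℤ) - ((n + 1 : ℕ) : ℤ))).eval x) n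
    rw [h2, pow_succ, mul_assoc, h, mul_add, ih, ih, add_comm]
    congr 1
    · refine Finset.sum_congr rfl fun i _ => ?_
      congr 3
      push_cast; ring
    · refine Finset.sum_congr rfl fun i _ => ?_
      congr 3
      push_cast; ring

lemma T_reflect_sum (x : ℝ) (n : ℕ) :
    ∑ i ∈ range (n + 1) with 2 * i < n, (n.choose i : ℝ) * (Chebyshev.T ℝ (2 * i - n)).eval x =
    ∑ i ∈ Icc (n / 2 + 1) n, (n.choose i : ℝ) * (Chebyshev.T ℝ (2 * i - n)).eval x := by
  refine Finset.sum_nbij' (fun i => n - i) (fun i => n - i) ?_ ?_ ?_ ?_ ?_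
  · intro i hi; simp at hi ⊢; omega
  · intro i hi; simp at hi ⊢; omega
  · intro i hi; simp at hi ⊢; omega
  · intro i hi; simp at hi ⊢; omega
  · intro i hi
    simp at hi
    have hi' : i ≤ n := by omega
    rw [Nat.choose_symm hi', ← Chebyshev.T_neg]
    congr 3
    push_cast [hi']; ring

lemma zpow_aux (n : ℕ) : (2 : ℝ) ^ (1 - (n : ℤ)) * 2 ^ n = 2 := by
  rw [← zpow_natCast, ← zpow_add₀ (by norm_num)]; simp

lemma base_case (x : ℝ) (n : ℕ) : x ^ n - phi n 0 x = (2 : ℝ) ^ (1 - (n : ℤ)) *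
    ∑ i ∈ Icc (n / 2 + 1) n, (n.choose i : ℝ) * (Chebyshev.T ℝ (2 * i - n)).eval x := by
  have h := two_x_pow_mul_T x n 0
  simp only [Chebyshev.T_zero, eval_one, mul_one, zero_add] at h
  rw [← Finset.sum_filter_add_sum_filter_not _ (fun i => 2 * i < n), T_reflect_sum] at h
  have h3 : ∑ i ∈ range (n + 1) with ¬ 2 * i < n,
      (n.choose i : ℝ) * (Chebyshev.T ℝ (2 * i - n)).eval x =
      (if n % 2 = 0 then (n.choose (n / 2) : ℝ) else 0) +
      ∑ i ∈ Icc (n / 2 + 1) n, (n.choose i : ℝ) * (Chebyshev.T ℝ (2 * i - n)).eval x := by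
    split_ifs with hp
    · have : (range (n + 1)).filter (fun i => ¬ 2 * i < n) =
          insert (n / 2) (Icc (n / 2 + 1) n) := by
        ext i; simp; omega
      rw [this, Finset.sum_insert (by simp)]
      have e : (2 * ((n / 2 : ℕ) : ℤ) - n) = 0 := by omega
      rw [e]; simp
    · have : (range (n + 1)).filter (fun i => ¬ 2 * i < n) = Icc (n / 2 + 1) n := by
        ext i; simp; omega
      rw [this, zero_add]
  rw [h3, mul_pow] at h
  have hz := zpow_aux n
  have hphi : phi n 0 x =
      (2 : ℝ) ^ (1 - (n : ℤ)) * (if n % 2 = 0 then (n.choose (n / 2) : ℝ) else 0) / 2 := by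
    simp [phi, chebCoeff]
  rw [hphi]
  generalize (2 : ℝ) ^ (1 - (n : ℤ)) = c at *
  linear_combination (c / 2) * h - x ^ n / 2 * hz

lemma error_formula (x : ℝ) (n k : ℕ) (hk : k ≤ n) :
    x ^ n - phi n k x = (2 : ℝ) ^ (1 - (n : ℤ)) *
    ∑ i ∈ Icc ((n + k) / 2 + 1) n, (n.choose i : ℝ) * (Chebyshev.T ℝ (2 * i - n)).eval x := by
  induction k with
  | zero => exact base_case x n
  | succ k ih =>
    have ih := ih (by omega)
    have hs : phi n (k + 1) x = phi n k x +
        chebCoeff n (k + 1) * (Chebyshev.T ℝ ((k + 1 : ℕ) : ℤ)).eval x := by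
      unfold phi
      rw [Finset.sum_Icc_succ_top (by omega)]; ring
    rw [hs, ← sub_sub, ih, chebCoeff]
    split_ifs with hp
    · have e : Icc ((n + k) / 2 + 1) n =
          insert ((n + k) / 2 + 1) (Icc ((n + (k + 1)) / 2 + 1) n) := by
        ext i; simp; omega
      rw [e, Finset.sum_insert (by simp; omega)]
      have e1 : (2 * (((n + k) / 2 + 1 : ℕ) : ℤ) - n) = ((k + 1 : ℕ) : ℤ) := by omega
      have e2 : (n - (k + 1)) / 2 = n - ((n + k) / 2 + 1) := by omega
      rw [e1, e2, Nat.choose_symm (by omega)]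
      ring
    · have e : (n + (k + 1)) / 2 = (n + k) / 2 := by omega
      rw [e]; ring

/-- Main theorem: for `0 ≤ k < n`, the supremum over `x ∈ [-1, 1]` of `|x^n - φ_k(x)|`
equals `p_{n,k}`. -/
theorem sup_abs_monomial_sub_phi (n k : ℕ) (hk : k < n) :
    ⨆ x : Set.Icc (-1 : ℝ) 1, |(x : ℝ) ^ n - phi n k x| = pnk n k := by
  have hub : ∀ x : Set.Icc (-1 : ℝ) 1, |(x : ℝ) ^ n - phi n k x| ≤ pnk n k := by
    rintro ⟨x, hx⟩
    have hx' : |x| ≤ 1 := abs_le.2 hx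
    simp only
    rw [error_formula x n k hk.le, pnk, abs_mul, abs_of_pos (by positivity : (0 : ℝ) < 2 ^ (1 - (n : ℤ)))]
    refine mul_le_mul_of_nonneg_left ?_ (by positivity)
    refine (Finset.abs_sum_le_sum_abs _ _).trans (Finset.sum_le_sum fun i _ => ?_)
    rw [abs_mul, Nat.abs_cast]
    exact mul_le_of_le_one_right (by positivity) (Chebyshev.abs_eval_T_real_le_one _ hx')
  have : Nonempty (Set.Icc (-1 : ℝ) 1) := ⟨⟨1, by norm_num⟩⟩
  refine le_antisymm (ciSup_le hub) ?_
  have h1 := le_ciSup (f := fun x : Set.Icc (-1 : ℝ) 1 => |(x : ℝ) ^ n - phi n k x|)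
    ⟨pnk n k, by rintro _ ⟨x, rfl⟩; exact hub x⟩ ⟨1, by norm_num⟩
  refine le_trans ?_ h1
  simp only
  rw [error_formula 1 n k hk.le, pnk]
  simp only [Chebyshev.T_eval_one, mul_one]
  exact le_abs_self _
end

section
/- For all natural numbers n ≥ 1 and k with 0 ≤ k ≤ n/2, the lower partial sum of binomial coefficients satisfies Σ_{j=0}^{k} C(n, j) ≤ 2^n exp(-(n - 2k)²/(2n)). -/
open Finset

/-- For `n ≥ 1` and `0 ≤ k ≤ n/2`, the lower partial sum of binomial coefficients satisfies
`Σ_{j=0}^{k} C(n, j) ≤ 2^n exp(-(n - 2k)²/(2n))`. -/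
theorem sum_choose_le (n k : ℕ) (hn : 1 ≤ n) (hk : 2 * k ≤ n) :
    (∑ j ∈ Finset.range (k + 1), (n.choose j : ℝ)) ≤
      2 ^ n * Real.exp (-((n : ℝ) - 2 * k) ^ 2 / (2 * n)) := by
  have hn0 : (0 : ℝ) < n := by exact_mod_cast hn
  have hk' : (2 : ℝ) * k ≤ n := by exact_mod_cast hk
  obtain ⟨t, ht⟩ : ∃ t : ℝ, t = ((n : ℝ) - 2 * k) / n := ⟨_, rfl⟩
  have ht0 : 0 ≤ t := by rw [ht]; exact div_nonneg (by linarith) hn0.le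
  have hbin : ∑ j ∈ Finset.range (n + 1), (n.choose j : ℝ) * Real.exp (t * (n - 2 * j))
      = (2 * Real.cosh t) ^ n := by
    have h2 : 2 * Real.cosh t = Real.exp (-t) + Real.exp t := by
      rw [Real.cosh_eq]; ring
    rw [h2, add_pow]
    refine Finset.sum_congr rfl fun j hj => ?_
    have hj' : j ≤ n := Nat.lt_succ_iff.mp (Finset.mem_range.mp hj)
    rw [← Real.exp_nat_mul, ← Real.exp_nat_mul, ← Real.exp_add, mul_comm, Nat.cast_sub hj']
    congr 2
    ring
  calc (∑ j ∈ Finset.range (k + 1), (n.choose j : ℝ))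
      ≤ ∑ j ∈ Finset.range (k + 1),
          ((n.choose j : ℝ) * Real.exp (t * (n - 2 * j))) * Real.exp (-(t * (n - 2 * k))) := by
        refine Finset.sum_le_sum fun j hj => ?_
        have hj' : (j : ℝ) ≤ k := by
          exact_mod_cast Nat.lt_succ_iff.mp (Finset.mem_range.mp hj)
        rw [mul_assoc, ← Real.exp_add]
        refine le_mul_of_one_le_right (Nat.cast_nonneg _) (Real.one_le_exp ?_)
        nlinarith [mul_nonneg ht0 (sub_nonneg.mpr hj')]
    _ ≤ ∑ j ∈ Finset.range (n + 1),
          ((n.choose j : ℝ) * Real.exp (t * (n - 2 * j))) * Real.exp (-(t * (n - 2 * k))) := by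
        refine Finset.sum_le_sum_of_subset_of_nonneg
          (Finset.range_subset_range.mpr (by omega)) fun j _ _ => by positivity
    _ = (2 * Real.cosh t) ^ n * Real.exp (-(t * (n - 2 * k))) := by
        rw [← Finset.sum_mul, hbin]
    _ ≤ (2 * Real.exp (t ^ 2 / 2)) ^ n * Real.exp (-(t * (n - 2 * k))) := by
        have := Real.cosh_le_exp_half_sq t
        have := Real.cosh_pos t
        gcongr
    _ = 2 ^ n * Real.exp (-((n : ℝ) - 2 * k) ^ 2 / (2 * n)) := by
        rw [mul_pow, ← Real.exp_nat_mul, mul_assoc, ← Real.exp_add]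
        congr 2
        rw [ht]
        field_simp
        ring
end

section
/- For every natural number n ≥ 1, every real ε > 0, and every natural number k with k < n and k ≥ √(2 n log(2/ε)), there exists a polynomial p of degree at most k with real coefficients such that |x^n - p(x)| ≤ ε for all x ∈ [-1, 1]. (The truncated Chebyshev approximant φ_k is such a polynomial.) -/
open Finset Polynomial

lemma aux_exp (n : ℕ) (t : ℂ) :
    (2 * Complex.cosh t) ^ n =
      ∑ m ∈ range (n + 1), (n.choose m : ℂ) * Complex.exp (((2 * (m : ℤ) - n : ℤ) : ℂ) * t) := by
  rw [Complex.two_cosh, add_pow]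
  refine Finset.sum_congr rfl fun m hm => ?_
  have hm' : m ≤ n := by simpa [Nat.lt_succ_iff] using hm
  rw [← Complex.exp_nat_mul, ← Complex.exp_nat_mul, ← Complex.exp_add, mul_comm]
  congr 2
  push_cast [Nat.cast_sub hm']
  ring

lemma aux_cosh (n : ℕ) (t : ℝ) :
    (2 * Real.cosh t) ^ n =
      ∑ m ∈ range (n + 1), (n.choose m : ℝ) * Real.exp (((2 * (m : ℤ) - n : ℤ) : ℝ) * t) := by
  have := aux_exp n t
  exact_mod_cast this

lemma aux_cos (n : ℕ) (t : ℝ) :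
    (2 * Real.cos t) ^ n =
      ∑ m ∈ range (n + 1), (n.choose m : ℝ) * Real.cos (((2 * (m : ℤ) - n : ℤ) : ℝ) * t) := by
  have h := congrArg Complex.re (aux_exp n (t * Complex.I))
  rw [Complex.cosh_mul_I, Complex.re_sum] at h
  have h1 : ((2 * Complex.cos t) ^ n).re = (2 * Real.cos t) ^ n := by
    rw [← Complex.ofReal_cos]
    exact_mod_cast Complex.ofReal_re _
  rw [h1] at h
  rw [h]
  refine Finset.sum_congr rfl fun m _ => ?_
  have h2 : (((2 * (m : ℤ) - n : ℤ) : ℂ) * (t * Complex.I)) =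
      (((((2 * (m : ℤ) - n : ℤ) : ℝ) * t : ℝ) : ℂ)) * Complex.I := by
    push_cast; ring
  rw [h2, ← Complex.ofReal_natCast, Complex.re_ofReal_mul, Complex.exp_ofReal_mul_I_re]

/-- For every `n ≥ 1`, every `ε > 0`, and every `k < n` with `k ≥ √(2 n log(2/ε))`, there is
a polynomial `p` of degree at most `k` with `|x^n - p(x)| ≤ ε` on `[-1, 1]`. -/
theorem exists_poly_approx_monomial (n : ℕ) (hn : 1 ≤ n) (ε : ℝ) (hε : 0 < ε)
    (k : ℕ) (hkn : k < n) (hk : Real.sqrt (2 * n * Real.log (2 / ε)) ≤ k) :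
    ∃ p : Polynomial ℝ, p.degree ≤ k ∧
      ∀ x ∈ Set.Icc (-1 : ℝ) 1, |x ^ n - p.eval x| ≤ ε := by
  have hn0 : (0 : ℝ) < n := by exact_mod_cast hn
  set j : ℕ → ℤ := fun m => 2 * (m : ℤ) - n with hj
  refine ⟨∑ m ∈ range (n + 1) with (j m).natAbs ≤ k,
    Polynomial.C ((n.choose m : ℝ) / 2 ^ n) * Chebyshev.T ℝ (j m), ?_, ?_⟩
  · refine (Polynomial.degree_sum_le _ _).trans (Finset.sup_le fun m hm => ?_)
    rw [Polynomial.C_mul']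
    refine (Polynomial.degree_smul_le _ _).trans ?_
    rw [Chebyshev.degree_T]
    exact_mod_cast (Finset.mem_filter.1 hm).2
  · intro x hx
    obtain ⟨t, rfl⟩ : ∃ t, Real.cos t = x := ⟨_, Real.cos_arccos hx.1 hx.2⟩
    have hx' : Real.cos t ^ n = ∑ m ∈ range (n + 1),
        (n.choose m : ℝ) / 2 ^ n * Real.cos ((j m : ℝ) * t) := by
      have := aux_cos n t
      rw [mul_pow] at this
      rw [eq_div_of_mul_eq (by positivity) ((mul_comm _ _).trans this), Finset.sum_div]
      exact Finset.sum_congr rfl fun m _ => by simp only [hj]; ring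
    rw [hx', Polynomial.eval_finsetSum]
    simp only [Polynomial.eval_mul, Polynomial.eval_C, Chebyshev.T_real_cos]
    rw [← Finset.sum_filter_add_sum_filter_not (range (n + 1)) (fun m => (j m).natAbs ≤ k),
      add_sub_cancel_left]
    set l : ℝ := k / n with hl
    have hl0 : 0 ≤ l := by positivity
    have hterm : ∀ m, ¬ (j m).natAbs ≤ k →
        1 ≤ Real.exp (-(l * k)) * (Real.exp (j m * l) + Real.exp (j m * (-l))) := by
      intro m hm
      have h1 : (k : ℝ) ≤ |(j m : ℝ)| := by
        rw [← Int.cast_abs, Int.abs_eq_natAbs]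
        exact_mod_cast (not_le.1 hm).le
      rw [mul_add, ← Real.exp_add, ← Real.exp_add]
      rcases le_abs.1 h1 with h | h
      · have : 1 ≤ Real.exp (-(l * k) + j m * l) := Real.one_le_exp (by nlinarith)
        linarith [Real.exp_pos (-(l * k) + j m * (-l))]
      · have : 1 ≤ Real.exp (-(l * k) + j m * (-l)) := Real.one_le_exp (by nlinarith)
        linarith [Real.exp_pos (-(l * k) + j m * l)]
    have hS : ∑ m ∈ range (n + 1), (n.choose m : ℝ) / 2 ^ n *
        (Real.exp (-(l * k)) * (Real.exp (j m * l) + Real.exp (j m * (-l))))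
        = Real.exp (-(l * k)) * (2 * Real.cosh l ^ n) := by
      have e1 := aux_cosh n l
      have e2 := aux_cosh n (-l)
      rw [Real.cosh_neg] at e2
      have : 2 * Real.cosh l ^ n = ((2 * Real.cosh l) ^ n + (2 * Real.cosh l) ^ n) / 2 ^ n := by
        rw [mul_pow]; field_simp; ring
      rw [this]
      nth_rewrite 1 [e1]
      rw [e2, ← Finset.sum_add_distrib, Finset.sum_div, Finset.mul_sum]
      exact Finset.sum_congr rfl fun m _ => by simp only [hj]; ring
    have hc : Real.cosh l ^ n ≤ Real.exp (n * (l ^ 2 / 2)) := by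
      rw [Real.exp_nat_mul]
      exact pow_le_pow_left₀ (Real.cosh_pos l).le (Real.cosh_le_exp_half_sq l) n
    have hk2 : 2 * n * Real.log (2 / ε) ≤ (k : ℝ) ^ 2 := (Real.sqrt_le_left (by positivity)).1 hk
    calc _ ≤ ∑ m ∈ range (n + 1) with ¬ (j m).natAbs ≤ k, (n.choose m : ℝ) / 2 ^ n *
        (Real.exp (-(l * k)) * (Real.exp (j m * l) + Real.exp (j m * (-l)))) := by
          refine (Finset.abs_sum_le_sum_abs _ _).trans (Finset.sum_le_sum fun m hm => ?_)
          rw [abs_mul, abs_of_nonneg (by positivity : (0 : ℝ) ≤ (n.choose m : ℝ) / 2 ^ n)]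
          exact mul_le_mul_of_nonneg_left
            ((Real.abs_cos_le_one _).trans (hterm m (Finset.mem_filter.1 hm).2)) (by positivity)
      _ ≤ ∑ m ∈ range (n + 1), (n.choose m : ℝ) / 2 ^ n *
        (Real.exp (-(l * k)) * (Real.exp (j m * l) + Real.exp (j m * (-l)))) :=
          Finset.sum_le_sum_of_subset_of_nonneg (Finset.filter_subset _ _)
            fun m _ _ => by positivity
      _ = Real.exp (-(l * k)) * (2 * Real.cosh l ^ n) := hS
      _ ≤ Real.exp (-(l * k)) * (2 * Real.exp (n * (l ^ 2 / 2))) := by gcongr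
      _ = 2 * Real.exp (-(k ^ 2 / (2 * n))) := by
          rw [mul_left_comm, ← Real.exp_add]
          congr 2
          rw [hl]; field_simp; ring
      _ ≤ 2 * Real.exp (-Real.log (2 / ε)) := by
          gcongr
          rw [le_div_iff₀ (by positivity)]
          linarith
      _ = ε := by
          rw [Real.exp_neg, Real.exp_log (by positivity)]
          field_simp
end

section
/- For every natural number n ≥ 1 and every polynomial q of degree at most n - 1 with real coefficients, the supremum over x ∈ [-1, 1] of |x^n - q(x)| is at least 2^{1-n}, and this minimum value 2^{1-n} is attained by the polynomial q*(x) = x^n - 2^{1-n} T_n(x). -/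
open Finset Polynomial

/-- For `n ≥ 1`, every polynomial `q` of degree at most `n - 1` satisfies
`sup_{x ∈ [-1,1]} |x^n - q(x)| ≥ 2^(1-n)`, and this minimum `2^(1-n)` is attained by
`q*(x) = x^n - 2^(1-n) T_n(x)`, a polynomial of degree at most `n - 1`. -/
theorem minimax_monomial (n : ℕ) (hn : 1 ≤ n) :
    (∀ q : Polynomial ℝ, q.degree ≤ ((n - 1 : ℕ) : WithBot ℕ) →
      (2 : ℝ) ^ (1 - (n : ℤ)) ≤
        ⨆ x : Set.Icc (-1 : ℝ) 1, |(x : ℝ) ^ n - q.eval (x : ℝ)|) ∧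
    (Polynomial.X ^ n -
        Polynomial.C ((2 : ℝ) ^ (1 - (n : ℤ))) * Polynomial.Chebyshev.T ℝ (n : ℤ)).degree ≤
      ((n - 1 : ℕ) : WithBot ℕ) ∧
    (⨆ x : Set.Icc (-1 : ℝ) 1,
        |(x : ℝ) ^ n -
          (Polynomial.X ^ n -
            Polynomial.C ((2 : ℝ) ^ (1 - (n : ℤ))) *
              Polynomial.Chebyshev.T ℝ (n : ℤ)).eval (x : ℝ)|) =
      (2 : ℝ) ^ (1 - (n : ℤ)) := by
  obtain ⟨m, rfl⟩ : ∃ m, n = m + 1 := ⟨n - 1, by omega⟩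
  have hr : (2 : ℝ) ^ (1 - ((m + 1 : ℕ) : ℤ)) = (2 ^ m)⁻¹ := by
    have : (1 - ((m + 1 : ℕ) : ℤ)) = -(m : ℤ) := by push_cast; ring
    rw [this, zpow_neg, zpow_natCast]
  rw [hr]
  simp only [Nat.add_sub_cancel]
  have hpos : (0 : ℝ) < (2 ^ m)⁻¹ := by positivity
  have hTdeg : (Chebyshev.T ℝ ((m + 1 : ℕ) : ℤ)).natDegree = m + 1 := by
    rw [Chebyshev.natDegree_T]; rfl
  have hTlead : (Chebyshev.T ℝ ((m + 1 : ℕ) : ℤ)).coeff (m + 1) = 2 ^ m := by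
    have h := Chebyshev.leadingCoeff_T ℝ ((m + 1 : ℕ) : ℤ)
    rw [leadingCoeff, hTdeg] at h
    rw [h, Int.natAbs_natCast, Nat.add_sub_cancel]
  refine ⟨?_, ?_, ?_⟩
  · intro q hq
    by_contra! hlt
    obtain ⟨r, hr1, hr2⟩ := exists_between hlt
    have hbdd : BddAbove (Set.range fun x : Set.Icc (-1 : ℝ) 1 =>
        |(x : ℝ) ^ (m + 1) - q.eval (x : ℝ)|) := by
      apply IsCompact.bddAbove
      apply isCompact_range
      fun_prop
    have h0 : 0 ≤ ⨆ x : Set.Icc (-1 : ℝ) 1, |(x : ℝ) ^ (m + 1) - q.eval (x : ℝ)| :=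
      Real.iSup_nonneg fun _ => abs_nonneg _
    have hrpos : 0 < r := h0.trans_lt hr1
    have hqc : q.coeff (m + 1) = 0 := by
      apply coeff_eq_zero_of_degree_lt
      apply hq.trans_lt
      exact_mod_cast Nat.lt_succ_self m
    have hdeg : (C r⁻¹ * (X ^ (m + 1) - q)).degree ≤ ((m + 1 : ℕ) : WithBot ℕ) := by
      rw [degree_C_mul (inv_ne_zero hrpos.ne')]
      refine (degree_sub_le _ _).trans (max_le ?_ (hq.trans ?_))
      · simp
      · exact_mod_cast Nat.le_succ m
    have key := Chebyshev.coeff_le_of_forall_abs_le_one hdeg (by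
      intro x hx
      have hx' := le_ciSup hbdd ⟨x, hx⟩
      simp only at hx'
      simp only [eval_mul, eval_C, eval_sub, eval_pow, eval_X, abs_mul, abs_inv,
        abs_of_pos hrpos]
      rw [inv_mul_le_iff₀ hrpos]
      linarith)
    simp only [coeff_C_mul, coeff_sub, coeff_X_pow_self, hqc, sub_zero, mul_one,
      Nat.add_sub_cancel] at key
    have := inv_le_of_inv_le₀ hrpos key
    linarith
  · rw [degree_le_iff_coeff_zero]
    intro k hk
    have hk : m < k := by exact_mod_cast hk
    rw [coeff_sub, coeff_C_mul]
    rcases eq_or_lt_of_le (Nat.succ_le_of_lt hk) with h | h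
    · subst h
      rw [Nat.succ_eq_add_one, hTlead, coeff_X_pow_self, inv_mul_cancel₀ (by positivity), sub_self]
    · rw [coeff_eq_zero_of_natDegree_lt (p := Chebyshev.T ℝ _) (by rw [hTdeg]; exact h),
        coeff_X_pow, if_neg (by omega)]
      simp
  · have hle : ∀ x : Set.Icc (-1 : ℝ) 1, |(x : ℝ) ^ (m + 1) -
          (X ^ (m + 1) - C ((2 : ℝ) ^ m)⁻¹ * Chebyshev.T ℝ ((m + 1 : ℕ) : ℤ)).eval (x : ℝ)| =
          (2 ^ m)⁻¹ * |(Chebyshev.T ℝ ((m + 1 : ℕ) : ℤ)).eval (x : ℝ)| := by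
      intro x
      rw [eval_sub, eval_mul, eval_C, eval_pow, eval_X, sub_sub_cancel, abs_mul, abs_of_pos hpos]
    have hT : ∀ x : Set.Icc (-1 : ℝ) 1,
        (2 ^ m)⁻¹ * |(Chebyshev.T ℝ ((m + 1 : ℕ) : ℤ)).eval (x : ℝ)| ≤ (2 ^ m)⁻¹ := by
      intro x
      apply mul_le_of_le_one_right hpos.le
      rw [← Real.cos_arccos x.2.1 x.2.2, Chebyshev.T_real_cos]
      exact Real.abs_cos_le_one _
    simp only [hle]
    haveI : Nonempty (Set.Icc (-1 : ℝ) 1) := ⟨⟨1, by norm_num⟩⟩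
    apply le_antisymm (ciSup_le hT)
    refine le_ciSup_of_le ⟨(2 ^ m)⁻¹, ?_⟩ ⟨1, by norm_num⟩ ?_
    · rintro _ ⟨x, rfl⟩
      exact hT x
    · simp
end
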